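/- Let n be an odd positive integer. There exist an open interval I_{π/4} containing π/4 and an open interval I_{3π/4} containing 3π/4 such that for every θ ∈ (I_{π/4} ∪ I_{3π/4}) ∖ {π/4, 3π/4}: the function Φ_n^θ has no critical zero, its nodal set N(Φ_n^θ) is connected, and ℝ² ∖ N(Φ_n^θ) has exactly two connected components (i.e. Φ_n^θ has exactly two nodal domains). -/

import Mathlib

open Polynomial Real Set

/-- Physicists' Hermite polynomials: `H 0 = 1`, `H 1 = 2X`,
`H (n+2) = 2X * H (n+1) - 2(n+1) * H n`. -/
noncomputable def hermiteH : ℕ → Polynomial ℝ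
  | 0 => 1
  | 1 => Polynomial.C 2 * Polynomial.X
  | (n + 2) => Polynomial.C 2 * Polynomial.X * hermiteH (n + 1)
      - Polynomial.C ((2 * (n + 1) : ℕ) : ℝ) * hermiteH n

/-- `z : Fin m → ℝ` enumerates the zeros of `P` in increasing order. -/
def IsZeroEnum (P : Polynomial ℝ) (m : ℕ) (z : Fin m → ℝ) : Prop :=
  StrictMono z ∧ (∀ i, P.eval (z i) = 0) ∧ (∀ x : ℝ, P.eval x = 0 → ∃ i, x = z i)

/-- The eigenfunction `Φ_n^θ`. -/
noncomputable def Phi (n : ℕ) (θ : ℝ) (p : ℝ × ℝ) : ℝ :=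
  (Real.cos θ * (hermiteH n).eval p.1 + Real.sin θ * (hermiteH n).eval p.2) *
    Real.exp (-(p.1 ^ 2 + p.2 ^ 2) / 2)

/-- A critical zero of `u` : a common zero of `u` and its differential. -/
def IsCriticalZero (u : ℝ × ℝ → ℝ) (p : ℝ × ℝ) : Prop :=
  u p = 0 ∧ fderiv ℝ u p = 0

/-- Nodal set of `u`. -/
def nodalSet (u : ℝ × ℝ → ℝ) : Set (ℝ × ℝ) := {p | u p = 0}

/-- The set of nodal domains of `u`, i.e. of connected components of the
complement of the nodal set. -/
def nodalDomains (u : ℝ × ℝ → ℝ) : Set (Set (ℝ × ℝ)) :=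
  {C | ∃ p, u p ≠ 0 ∧ C = connectedComponentIn {q | u q ≠ 0} p}

/-- The solution set of `L * g x = g y`. -/
def levelCurve (g : ℝ → ℝ) (L : ℝ) : Set (ℝ × ℝ) := {p | L * g p.1 = g p.2}

/-- The solution set of `L * g x < g y`. -/
def levelAbove (g : ℝ → ℝ) (L : ℝ) : Set (ℝ × ℝ) := {p | L * g p.1 < g p.2}

/-- The closed square of half-side `r` centred at the origin. -/
def square (r : ℝ) : Set (ℝ × ℝ) := Icc (-r) r ×ˢ Icc (-r) r

/-- Both the curve and the region above it are preconnected inside the square of half-side `r`. -/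
def SquareConnected (g : ℝ → ℝ) (L r : ℝ) : Prop :=
  IsPreconnected (levelCurve g L ∩ square r) ∧ IsPreconnected (levelAbove g L ∩ square r)

theorem isPreconnected_of_injOn_of_image {X : Type*} [TopologicalSpace X] {K : Set X}
    (hK : IsCompact K) {f : X → ℝ} (hf : Continuous f) (hinj : InjOn f K)
    (himg : IsPreconnected (f '' K)) : IsPreconnected K := by
  have : CompactSpace K := isCompact_iff_compactSpace.mp hK
  have hcont : Continuous (fun x : K => f x) := hf.comp continuous_subtype_val
  have hI : Function.Injective (fun x : K => f x) := fun a b h => Subtype.ext (hinj a.2 b.2 h)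
  have h := himg.preimage_of_isClosedMap hI hcont.isClosedMap (by
    rintro _ ⟨x, hx, rfl⟩; exact ⟨⟨x, hx⟩, rfl⟩)
  have hu : (fun x : K => f x) ⁻¹' (f '' K) = univ :=
    eq_univ_of_forall fun x => ⟨x, x.2, rfl⟩
  rw [hu] at h
  have := h.image Subtype.val continuous_subtype_val.continuousOn
  simpa using this

theorem isPreconnected_of_horizontal_spine {S : Set (ℝ × ℝ)} (x₀ : ℝ)
    (hJ : OrdConnected {y | (x₀, y) ∈ S})
    (hseg : ∀ p ∈ S, ∀ x ∈ uIcc p.1 x₀, (x, p.2) ∈ S) : IsPreconnected S := by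
  rcases S.eq_empty_or_nonempty with rfl | ⟨p₀, hp₀⟩
  · exact isPreconnected_empty
  refine isPreconnected_of_forall (x₀, p₀.2) fun p hp => ?_
  refine ⟨(fun x => (x, p.2)) '' uIcc p.1 x₀ ∪ (fun y => (x₀, y)) '' {y | (x₀, y) ∈ S},
    ?_, ?_, ?_, ?_⟩
  · rintro q (⟨x, hx, rfl⟩ | ⟨y, hy, rfl⟩)
    · exact hseg p hp x hx
    · exact hy
  · exact Or.inr ⟨p₀.2, hseg p₀ hp₀ x₀ right_mem_uIcc, rfl⟩
  · exact Or.inl ⟨p.1, left_mem_uIcc, rfl⟩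
  · refine IsPreconnected.union (x₀, p.2) ⟨x₀, right_mem_uIcc, rfl⟩
      ⟨p.2, hseg p hp x₀ right_mem_uIcc, rfl⟩ ?_ ?_
    · exact isPreconnected_uIcc.image _ (by fun_prop)
    · exact hJ.isPreconnected.image _ (by fun_prop)

theorem isPreconnected_of_vertical_spine {S : Set (ℝ × ℝ)} (y₀ : ℝ)
    (hJ : OrdConnected {x | (x, y₀) ∈ S})
    (hseg : ∀ p ∈ S, ∀ y ∈ uIcc p.2 y₀, (p.1, y) ∈ S) : IsPreconnected S := by
  have h := isPreconnected_of_horizontal_spine (S := Prod.swap ⁻¹' S) y₀ hJ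
    fun p hp x hx => hseg p.swap hp x hx
  have h' := h.image Prod.swap continuous_swap.continuousOn
  rwa [image_preimage_eq S Prod.swap_surjective] at h'

section

variable {g : ℝ → ℝ} {L : ℝ}

theorem levelCurve_neg_mem (hodd : ∀ x, g (-x) = -g x) {p : ℝ × ℝ} :
    -p ∈ levelCurve g L ↔ p ∈ levelCurve g L := by
  simp [levelCurve, hodd]

theorem square_neg_mem {r : ℝ} {p : ℝ × ℝ} : -p ∈ square r ↔ p ∈ square r := by
  simp only [square, mem_prod, mem_Icc, Prod.fst_neg, Prod.snd_neg]
  constructor <;> rintro ⟨⟨_, _⟩, _, _⟩ <;> refine ⟨⟨?_, ?_⟩, ?_, ?_⟩ <;> linarith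

theorem IsPreconnected.neg_preimage {S : Set (ℝ × ℝ)} (hS : IsPreconnected S) :
    IsPreconnected {p | -p ∈ S} := by
  have h := hS.image (fun p => -p) continuous_neg.continuousOn
  rwa [image_neg_eq_neg] at h

theorem SquareConnected.of_neg (hodd : ∀ x, g (-x) = -g x) {r : ℝ}
    (h : SquareConnected (fun x => -g x) L r) : SquareConnected g L r := by
  refine ⟨?_, ?_⟩
  · convert h.1 using 2
    ext p; simp [levelCurve]
  · convert h.2.neg_preimage using 1
    ext p
    simp only [mem_inter_iff, mem_ofPred_eq, square_neg_mem]
    simp [levelAbove, hodd]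

theorem isCompact_levelCurve_inter (hg : Continuous g) (a b c d : ℝ) :
    IsCompact (levelCurve g L ∩ Icc a b ×ˢ Icc c d) := by
  refine (isCompact_Icc.prod isCompact_Icc).inter_left ?_
  exact isClosed_eq (by fun_prop) (by fun_prop)

theorem exists_mul_eq_of_mem_Icc (hg : Continuous g) {a b t : ℝ} (hab : a ≤ b)
    (h : t ∈ uIcc (L * g a) (L * g b)) : ∃ x ∈ Icc a b, L * g x = t := by
  have := intermediate_value_uIcc (f := fun x => L * g x) (a := a) (b := b)
    (by fun_prop) h
  rwa [uIcc_of_le hab] at this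

/-- Base case: `g` is strictly increasing on the whole square. -/
theorem SquareConnected.of_strictMonoOn (hodd : ∀ x, g (-x) = -g x) (hg : Continuous g)
    (hL : 1 < L) {d : ℝ} (hd : 0 < d) (hmono : StrictMonoOn g (Icc (-d) d)) :
    SquareConnected g L d := by
  have hd' : -d ≤ d := by linarith
  have hlo : ∀ y ∈ Icc (-d) d, -g d ≤ g y := fun y hy => by
    rw [← hodd]; exact hmono.monotoneOn ⟨le_rfl, hd'⟩ hy hy.1
  have hhi : ∀ y ∈ Icc (-d) d, g y ≤ g d := fun y hy =>
    hmono.monotoneOn hy ⟨hd', le_rfl⟩ hy.2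
  have hpos : 0 < g d := by
    have := hmono ⟨le_rfl, hd'⟩ ⟨hd', le_rfl⟩ (by linarith)
    rw [hodd] at this; linarith
  have hLg : g d < L * g d := by nlinarith
  constructor
  · refine isPreconnected_of_injOn_of_image (isCompact_levelCurve_inter hg _ _ _ _)
      continuous_snd ?_ ?_
    · rintro ⟨x, y⟩ ⟨h1, h2, -⟩ ⟨x', y'⟩ ⟨h1', h2', -⟩ (rfl : y = y')
      have : L * g x = L * g x' := h1.trans h1'.symm
      have : g x = g x' := mul_left_cancel₀ (by positivity) this
      exact Prod.ext (hmono.injOn h2 h2' this) rfl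
    · have : Prod.snd '' (levelCurve g L ∩ square d) = Icc (-d) d := by
        ext y
        constructor
        · rintro ⟨p, ⟨-, -, hp⟩, rfl⟩; exact hp
        · intro hy
          obtain ⟨x, hx, hxy⟩ := exists_mul_eq_of_mem_Icc (L := L) hg hd' (t := g y) (by
            rw [hodd, uIcc_of_le (by nlinarith)]
            have := hlo y hy; have := hhi y hy
            constructor <;> linarith)
          exact ⟨(x, y), ⟨hxy, hx, hy⟩, rfl⟩
      exact this ▸ isPreconnected_Icc
  · refine isPreconnected_of_horizontal_spine (-d) ?_ ?_
    · convert (ordConnected_Icc : OrdConnected (Icc (-d) d)) using 1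
      ext y
      constructor
      · rintro ⟨-, -, hy⟩; exact hy
      · intro hy
        refine ⟨?_, ⟨le_rfl, hd'⟩, hy⟩
        have := hlo y hy
        change L * g (-d) < g y
        rw [hodd]; linarith
    · rintro ⟨x, y⟩ ⟨h1, h2, h3⟩ x' hx'
      have h2' : x ∈ Icc (-d) d := h2
      rw [uIcc_of_ge h2'.1] at hx'
      have hx'' : x' ∈ Icc (-d) d := ⟨hx'.1, hx'.2.trans h2'.2⟩
      refine ⟨?_, hx'', h3⟩
      have h1' : L * g x < g y := h1
      have := hmono.monotoneOn hx'' h2' hx'.2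
      change L * g x' < g y
      nlinarith

/-- The data needed to enlarge the square of half-side `c` to that of half-side `d`, where `c` is a
local minimum of `g` with negative value and `e` is the preceding turning point. -/
structure GrowthData (g : ℝ → ℝ) (L e c d : ℝ) : Prop where
  odd : ∀ x, g (-x) = -g x
  cont : Continuous g
  one_lt : 1 < L
  nonneg : 0 ≤ e
  lt_left : e < c
  lt_right : c < d
  mono : StrictMonoOn g (Icc c d)
  anti : StrictAntiOn g (Icc e c)
  neg : g c < 0
  small : ∀ x ∈ Icc (-e) e, L * |g x| < -g c
  inner : ∀ x ∈ Icc (-c) c, |g x| ≤ -g c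
  large : L * -g c < g d

namespace GrowthData

variable {e c d : ℝ}

theorem pos (h : GrowthData g L e c d) : 0 < c := h.nonneg.trans_lt h.lt_left

theorem bounds_right (h : GrowthData g L e c d) {x : ℝ} (hx : x ∈ Icc c d) :
    g c ≤ g x ∧ g x ≤ g d :=
  ⟨h.mono.monotoneOn ⟨le_rfl, h.lt_right.le⟩ hx hx.1,
    h.mono.monotoneOn hx ⟨h.lt_right.le, le_rfl⟩ hx.2⟩

theorem bounds_left (h : GrowthData g L e c d) {x : ℝ} (hx : x ∈ Icc (-d) (-c)) :
    -g d ≤ g x ∧ g x ≤ -g c := by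
  have := h.bounds_right (x := -x) ⟨by linarith [hx.2], by linarith [hx.1]⟩
  rw [h.odd] at this
  constructor <;> linarith

theorem bounds_inner (h : GrowthData g L e c d) {x : ℝ} (hx : x ∈ Icc (-c) c) :
    g c ≤ g x ∧ g x ≤ -g c := by
  have := abs_le.mp (h.inner x hx)
  constructor <;> linarith

theorem gap (h : GrowthData g L e c d) :
    L * g c < g c ∧ g c < 0 ∧ -g c < g d ∧ g d < L * g d ∧ -(L * g c) < g d := by
  have h1 := h.one_lt
  have h2 := h.neg
  have h3 := h.large
  have h4 : L * g c < g c := by nlinarith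
  have h5 : -g c < g d := by linarith
  exact ⟨h4, h2, h5, by nlinarith, by linarith⟩

theorem bounds (h : GrowthData g L e c d) {x : ℝ} (hx : x ∈ Icc (-d) d) :
    -g d ≤ g x ∧ g x ≤ g d := by
  have := h.gap
  rcases le_total x (-c) with h1 | h1
  · have := h.bounds_left ⟨hx.1, h1⟩
    constructor <;> linarith
  rcases le_total x c with h2 | h2
  · have := h.bounds_inner ⟨h1, h2⟩
    constructor <;> linarith
  · have := h.bounds_right ⟨h2, hx.2⟩
    constructor <;> linarith

theorem mono_left (h : GrowthData g L e c d) : StrictMonoOn g (Icc (-d) (-c)) := by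
  intro x hx y hy hxy
  have := h.mono (a := -y) (b := -x) ⟨by linarith [hy.2], by linarith [hy.1]⟩
    ⟨by linarith [hx.2], by linarith [hx.1]⟩ (by linarith)
  rw [h.odd, h.odd] at this
  linarith

theorem le_or_le_outer (h : GrowthData g L e c d) {x y : ℝ} (hx : -d ≤ x) (hy : y ≤ d)
    (hxy : x ≤ y) : g c ≤ g y ∨ g x ≤ g y := by
  rcases le_total y (-c) with h1 | h1
  · exact Or.inr (h.mono_left.monotoneOn ⟨hx, hxy.trans h1⟩ ⟨hx.trans hxy, h1⟩ hxy)
  rcases le_total y c with h2 | h2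
  · exact Or.inl (h.bounds_inner ⟨h1, h2⟩).1
  · exact Or.inl (h.bounds_right ⟨h2, hy⟩).1

theorem lt_or_le_inner (h : GrowthData g L e c d) {x y : ℝ} (hx : -c ≤ x) (hy : y ≤ c)
    (hxy : x ≤ y) : g c < L * g x ∨ g y ≤ g x := by
  have hsmall : ∀ z ∈ Icc (-e) e, g c < L * g z := fun z hz => by
    have := h.small z hz
    have := neg_abs_le (g z)
    nlinarith [h.one_lt]
  rcases le_total e x with h1 | h1
  · exact Or.inr (h.anti.antitoneOn ⟨h1, hxy.trans hy⟩ ⟨h1.trans hxy, hy⟩ hxy)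
  rcases le_total (-e) x with h2 | h2
  · exact Or.inl (hsmall x ⟨h2, h1⟩)
  · left
    have h3 := hsmall (-e) ⟨le_rfl, by linarith [h.nonneg]⟩
    have h4 := h.anti.antitoneOn (a := e) (b := -x) ⟨le_rfl, h.lt_left.le⟩
      ⟨by linarith, by linarith⟩ (by linarith)
    rw [h.odd] at h3 h4
    nlinarith [h.one_lt]

theorem lt_or_le_inner' (h : GrowthData g L e c d) {x y : ℝ} (hx : -c ≤ x) (hy : y ≤ c)
    (hxy : x ≤ y) : L * g y < -g c ∨ g y ≤ g x := by
  have := h.lt_or_le_inner (x := -y) (y := -x) (by linarith) (by linarith) (by linarith)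
  rw [h.odd, h.odd] at this
  rcases this with h | h
  · left; linarith
  · right; linarith

theorem curve_column (h : GrowthData g L e c d) :
    IsPreconnected (levelCurve g L ∩ Icc c d ×ˢ Icc (-d) d) := by
  have hL : 0 < L := by linarith [h.one_lt]
  have hgap := h.gap
  refine isPreconnected_of_injOn_of_image (isCompact_levelCurve_inter h.cont _ _ _ _)
    continuous_snd ?_ ?_
  · rintro ⟨x, y⟩ ⟨h1, h2, -⟩ ⟨x', y'⟩ ⟨h1', h2', -⟩ (rfl : y = y')
    have : g x = g x' := mul_left_cancel₀ hL.ne' (h1.trans h1'.symm)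
    exact Prod.ext (h.mono.injOn h2 h2' this) rfl
  · refine OrdConnected.isPreconnected ⟨?_⟩
    rintro _ ⟨⟨x₁, y₁⟩, ⟨h1, h2, h3⟩, rfl⟩ _ ⟨⟨x₃, y₃⟩, ⟨-, -, h3'⟩, rfl⟩ y hy
    have h1 : L * g x₁ = g y₁ := h1
    have h2 : x₁ ∈ Icc c d := h2
    have h3 : y₁ ∈ Icc (-d) d := h3
    have h3' : y₃ ∈ Icc (-d) d := h3'
    have hy' : y ∈ Icc (-d) d := ⟨h3.1.trans hy.1, hy.2.trans h3'.2⟩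
    have hlow : L * g c ≤ g y := by
      rcases h.le_or_le_outer h3.1 hy'.2 hy.1 with h5 | h5
      · linarith
      · have : L * g c ≤ L * g x₁ := mul_le_mul_of_nonneg_left (h.bounds_right h2).1 hL.le
        exact (this.trans h1.le).trans h5
    have hup := (h.bounds hy').2
    obtain ⟨x, hx, hxy⟩ := exists_mul_eq_of_mem_Icc (L := L) h.cont h.lt_right.le (t := g y) (by
      rw [uIcc_of_le (by linarith)]
      constructor <;> linarith)
    exact ⟨(x, y), ⟨hxy, hx, hy'⟩, rfl⟩

theorem curve_row (h : GrowthData g L e c d) :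
    IsPreconnected (levelCurve g L ∩ Icc (-c) c ×ˢ Icc c d) := by
  have hL : 0 < L := by linarith [h.one_lt]
  have hgap := h.gap
  refine isPreconnected_of_injOn_of_image (isCompact_levelCurve_inter h.cont _ _ _ _)
    continuous_fst ?_ ?_
  · rintro ⟨x, y⟩ ⟨h1, -, h2⟩ ⟨x', y'⟩ ⟨h1', -, h2'⟩ (rfl : x = x')
    exact Prod.ext rfl (h.mono.injOn h2 h2' (h1.symm.trans h1'))
  · refine OrdConnected.isPreconnected ⟨?_⟩
    rintro _ ⟨⟨x₁, y₁⟩, ⟨-, h2, -⟩, rfl⟩ _ ⟨⟨x₃, y₃⟩, ⟨h1', h2', h3'⟩, rfl⟩ x hx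
    have h1' : L * g x₃ = g y₃ := h1'
    have h2 : x₁ ∈ Icc (-c) c := h2
    have h2' : x₃ ∈ Icc (-c) c := h2'
    have h3' : y₃ ∈ Icc c d := h3'
    have hx' : x ∈ Icc (-c) c := ⟨h2.1.trans hx.1, hx.2.trans h2'.2⟩
    have hlow : g c ≤ L * g x := by
      rcases h.lt_or_le_inner hx'.1 h2'.2 hx.2 with h5 | h5
      · exact h5.le
      · have : L * g x₃ ≤ L * g x := mul_le_mul_of_nonneg_left h5 hL.le
        linarith [(h.bounds_right h3').1]
    have hup : L * g x ≤ L * -g c := mul_le_mul_of_nonneg_left (h.bounds_inner hx').2 hL.le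
    have hlarge := h.large
    obtain ⟨y, hy, hxy⟩ := exists_mul_eq_of_mem_Icc (L := 1) h.cont h.lt_right.le
      (t := L * g x) (by
        rw [uIcc_of_le (by linarith)]
        constructor <;> linarith)
    exact ⟨(x, y), ⟨by rw [one_mul] at hxy; exact hxy.symm, hx', hy⟩, rfl⟩

theorem above_right (h : GrowthData g L e c d) :
    IsPreconnected (levelAbove g L ∩ Icc c d ×ˢ Icc (-d) d) := by
  have hL : 0 < L := by linarith [h.one_lt]
  have hgap := h.gap
  refine isPreconnected_of_horizontal_spine c ⟨?_⟩ ?_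
  · rintro y₁ ⟨h1, h2, h3⟩ y₃ ⟨-, -, h3'⟩ y hy
    have h1 : L * g c < g y₁ := h1
    have hy' : y ∈ Icc (-d) d := ⟨h3.1.trans hy.1, hy.2.trans h3'.2⟩
    refine ⟨?_, h2, hy'⟩
    change L * g c < g y
    rcases h.le_or_le_outer h3.1 hy'.2 hy.1 with h5 | h5 <;> linarith
  · rintro ⟨x, y⟩ ⟨h1, h2, h3⟩ x' hx'
    have h1 : L * g x < g y := h1
    have h2 : x ∈ Icc c d := h2
    rw [uIcc_of_ge h2.1] at hx'
    have hx'' : x' ∈ Icc c d := ⟨hx'.1, hx'.2.trans h2.2⟩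
    refine ⟨?_, hx'', h3⟩
    have : L * g x' ≤ L * g x :=
      mul_le_mul_of_nonneg_left (h.mono.monotoneOn hx'' h2 hx'.2) hL.le
    exact this.trans_lt h1

theorem above_left (h : GrowthData g L e c d) :
    IsPreconnected (levelAbove g L ∩ Icc (-d) (-c) ×ˢ Icc (-d) d) := by
  have hL : 0 < L := by linarith [h.one_lt]
  have hgap := h.gap
  have hmem : -d ∈ Icc (-d) (-c) := ⟨le_rfl, by linarith [h.lt_right]⟩
  refine isPreconnected_of_horizontal_spine (-d) ⟨?_⟩ ?_
  · rintro y₁ ⟨-, -, h3⟩ y₃ ⟨-, -, h3'⟩ y hy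
    have hy' : y ∈ Icc (-d) d := ⟨h3.1.trans hy.1, hy.2.trans h3'.2⟩
    refine ⟨?_, hmem, hy'⟩
    change L * g (-d) < g y
    rw [h.odd]
    linarith [(h.bounds hy').1]
  · rintro ⟨x, y⟩ ⟨h1, h2, h3⟩ x' hx'
    have h1 : L * g x < g y := h1
    have h2 : x ∈ Icc (-d) (-c) := h2
    rw [uIcc_of_ge h2.1] at hx'
    have hx'' : x' ∈ Icc (-d) (-c) := ⟨hx'.1, hx'.2.trans h2.2⟩
    refine ⟨?_, hx'', h3⟩
    have : L * g x' ≤ L * g x :=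
      mul_le_mul_of_nonneg_left (h.mono_left.monotoneOn hx'' h2 hx'.2) hL.le
    exact this.trans_lt h1

theorem above_top (h : GrowthData g L e c d) :
    IsPreconnected (levelAbove g L ∩ Icc (-c) c ×ˢ Icc c d) := by
  have hL : 0 < L := by linarith [h.one_lt]
  have hgap := h.gap
  refine isPreconnected_of_vertical_spine d ⟨?_⟩ ?_
  · rintro x₁ ⟨-, h2, h3⟩ x₃ ⟨-, h2', -⟩ x hx
    have hx' : x ∈ Icc (-c) c := ⟨h2.1.trans hx.1, hx.2.trans h2'.2⟩
    refine ⟨?_, hx', h3⟩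
    change L * g x < g d
    have : L * g x ≤ L * -g c := mul_le_mul_of_nonneg_left (h.bounds_inner hx').2 hL.le
    linarith
  · rintro ⟨x, y⟩ ⟨h1, h2, h3⟩ y' hy'
    have h1 : L * g x < g y := h1
    have h3 : y ∈ Icc c d := h3
    rw [uIcc_of_le h3.2] at hy'
    have hy'' : y' ∈ Icc c d := ⟨h3.1.trans hy'.1, hy'.2⟩
    exact ⟨h1.trans_le (h.mono.monotoneOn h3 hy'' hy'.1), h2, hy''⟩

theorem above_bottom (h : GrowthData g L e c d) :
    IsPreconnected (levelAbove g L ∩ Icc (-c) c ×ˢ Icc (-d) (-c)) := by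
  have hL : 0 < L := by linarith [h.one_lt]
  have hgap := h.gap
  refine isPreconnected_of_vertical_spine (-c) ⟨?_⟩ ?_
  · rintro x₁ ⟨h1, h2, h3⟩ x₃ ⟨-, h2', -⟩ x hx
    have hx' : x ∈ Icc (-c) c := ⟨h2.1.trans hx.1, hx.2.trans h2'.2⟩
    refine ⟨?_, hx', h3⟩
    have h1 : L * g x₁ < g (-c) := h1
    change L * g x < g (-c)
    rw [h.odd] at h1 ⊢
    rcases h.lt_or_le_inner' h2.1 hx'.2 hx.1 with h5 | h5
    · exact h5
    · exact (mul_le_mul_of_nonneg_left h5 hL.le).trans_lt h1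
  · rintro ⟨x, y⟩ ⟨h1, h2, h3⟩ y' hy'
    have h1 : L * g x < g y := h1
    have h3 : y ∈ Icc (-d) (-c) := h3
    rw [uIcc_of_le h3.2] at hy'
    have hy'' : y' ∈ Icc (-d) (-c) := ⟨h3.1.trans hy'.1, hy'.2⟩
    exact ⟨h1.trans_le (h.mono_left.monotoneOn h3 hy'' hy'.1), h2, hy''⟩

theorem square_eq (h : GrowthData g L e c d) :
    square d = ((Icc (-c) c ×ˢ Icc c d ∪ Icc (-d) (-c) ×ˢ Icc (-d) d) ∪ Icc c d ×ˢ Icc (-d) d) ∪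
      (Icc (-c) c ×ˢ Icc (-d) (-c) ∪ square c) := by
  have h1 := h.pos
  have h2 := h.lt_right
  ext ⟨x, y⟩
  simp only [square, mem_union, mem_prod, mem_Icc]
  constructor
  · rintro ⟨⟨hx1, hx2⟩, hy1, hy2⟩
    rcases le_total x (-c) with hx | hx
    · tauto
    rcases le_total x c with hx' | hx'
    · rcases le_total y (-c) with hy | hy
      · tauto
      · rcases le_total y c with hy' | hy' <;> tauto
    · tauto
  · rintro (((⟨⟨_, _⟩, _, _⟩ | ⟨⟨_, _⟩, _, _⟩) | ⟨⟨_, _⟩, _, _⟩) |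
      (⟨⟨_, _⟩, _, _⟩ | ⟨⟨_, _⟩, _, _⟩)) <;>
      refine ⟨⟨?_, ?_⟩, ?_, ?_⟩ <;> linarith

theorem above_square (h : GrowthData g L e c d)
    (hc : IsPreconnected (levelAbove g L ∩ square c)) :
    IsPreconnected (levelAbove g L ∩ square d) := by
  have hgap := h.gap
  have h1 := h.pos
  have h2 := h.lt_right
  have hcc : L * g c < g (-c) := by rw [h.odd]; linarith
  rw [h.square_eq]
  simp only [inter_union_distrib_left]
  have hleft := h.above_top.union (-c, d) (by
    refine ⟨?_, ⟨le_rfl, by linarith⟩, h2.le, le_rfl⟩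
    change L * g (-c) < g d
    rw [h.odd]; linarith) (by
    refine ⟨?_, ⟨by linarith, le_rfl⟩, by linarith, le_rfl⟩
    change L * g (-c) < g d
    rw [h.odd]; linarith) h.above_left
  have hright := hleft.union (c, d) (Or.inl (by
    refine ⟨?_, ⟨by linarith, le_rfl⟩, h2.le, le_rfl⟩
    change L * g c < g d
    linarith)) (by
    refine ⟨?_, ⟨le_rfl, by linarith⟩, by linarith, le_rfl⟩
    change L * g c < g d
    linarith) h.above_right
  have hbot := h.above_bottom.union (c, -c)
    (by exact ⟨hcc, ⟨by linarith, le_rfl⟩, by linarith, le_rfl⟩)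
    (by exact ⟨hcc, ⟨by linarith, le_rfl⟩, le_rfl, by linarith⟩) hc
  exact hright.union (c, -c)
    (Or.inr ⟨hcc, ⟨le_rfl, by linarith⟩, by linarith, by linarith⟩)
    (Or.inl ⟨hcc, ⟨by linarith, le_rfl⟩, by linarith, le_rfl⟩) hbot

theorem curve_square (h : GrowthData g L e c d)
    (hc : IsPreconnected (levelCurve g L ∩ square c)) :
    IsPreconnected (levelCurve g L ∩ square d) := by
  have hgap := h.gap
  have h1 := h.pos
  have h2 := h.lt_right
  set U : Set (ℝ × ℝ) := levelCurve g L ∩ Icc (-c) c ×ˢ Icc c d ∪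
    {p | -p ∈ levelCurve g L ∩ Icc c d ×ˢ Icc (-d) d} ∪ levelCurve g L ∩ square c with hU
  have hUconn : IsPreconnected U := by
    obtain ⟨y, hy, hxy⟩ := exists_mul_eq_of_mem_Icc (L := 1) h.cont h2.le (t := L * g (-c)) (by
      rw [h.odd, uIcc_of_le (by linarith)]
      constructor <;> linarith)
    rw [one_mul] at hxy
    obtain ⟨x, hx, hxc⟩ := exists_mul_eq_of_mem_Icc (L := L) h.cont (a := -c) (b := c) (t := g c)
      (by linarith) (by
        rw [h.odd, uIcc_of_ge (by linarith)]
        constructor <;> linarith)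
    have hmem : ((-c, y) : ℝ × ℝ) ∈ levelCurve g L ∩ Icc (-c) c ×ˢ Icc c d :=
      ⟨hxy.symm, ⟨le_rfl, by linarith⟩, hy⟩
    have hmem' : ((x, c) : ℝ × ℝ) ∈ levelCurve g L ∩ square c :=
      ⟨hxc, hx, by linarith, le_rfl⟩
    refine (h.curve_row.union (-c, y) hmem ?_ h.curve_column.neg_preimage).union (x, c)
      (Or.inl ⟨hxc, hx, le_rfl, h2.le⟩) hmem' hc
    refine ⟨(levelCurve_neg_mem h.odd).mpr hxy.symm, ?_⟩
    simp only [mem_prod, mem_Icc, Prod.fst_neg, Prod.snd_neg]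
    have := hy.1; have := hy.2
    refine ⟨⟨?_, ?_⟩, ?_, ?_⟩ <;> linarith
  have h0 : L * g 0 = g 0 := by
    have := h.odd 0
    rw [neg_zero] at this
    have : g 0 = 0 := by linarith
    rw [this, mul_zero]
  have h00 : ((0, 0) : ℝ × ℝ) ∈ U :=
    Or.inr ⟨h0, ⟨by linarith, by linarith⟩, by linarith, by linarith⟩
  have hunion := hUconn.union (0, 0) h00 (by simpa using h00) hUconn.neg_preimage
  convert hunion using 1
  ext p
  constructor
  · rintro ⟨hp, hs⟩
    have hp' := (levelCurve_neg_mem h.odd).mpr hp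
    rw [h.square_eq] at hs
    rcases hs with ((hs | hs) | hs) | (hs | hs)
    · exact Or.inl (Or.inl (Or.inl ⟨hp, hs⟩))
    · obtain ⟨⟨_, _⟩, _, _⟩ := hs
      refine Or.inl (Or.inl (Or.inr ⟨hp', ⟨?_, ?_⟩, ?_, ?_⟩)) <;>
        simp only [Prod.fst_neg, Prod.snd_neg] <;> linarith
    · refine Or.inr (Or.inl (Or.inr ?_))
      rw [mem_ofPred_eq, neg_neg]
      exact ⟨hp, hs⟩
    · obtain ⟨⟨_, _⟩, _, _⟩ := hs
      refine Or.inr (Or.inl (Or.inl ⟨hp', ⟨?_, ?_⟩, ?_, ?_⟩)) <;>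
        simp only [Prod.fst_neg, Prod.snd_neg] <;> linarith
    · exact Or.inl (Or.inr ⟨hp, hs⟩)
  · have hsub : ∀ q ∈ U, q ∈ levelCurve g L ∩ square d := by
      rintro q ((⟨hq, hs⟩ | ⟨hq, hs⟩) | ⟨hq, hs⟩)
      · exact ⟨hq, h.square_eq ▸ Or.inl (Or.inl (Or.inl hs))⟩
      · refine ⟨(levelCurve_neg_mem h.odd).mp hq, square_neg_mem.mp ?_⟩
        exact h.square_eq ▸ Or.inl (Or.inr hs)
      · exact ⟨hq, h.square_eq ▸ Or.inr (Or.inr hs)⟩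
    rintro (hp | hp)
    · exact hsub p hp
    · obtain ⟨hq, hs⟩ := hsub _ hp
      exact ⟨(levelCurve_neg_mem h.odd).mp hq, square_neg_mem.mp hs⟩

theorem squareConnected (h : GrowthData g L e c d) (hc : SquareConnected g L c) :
    SquareConnected g L d :=
  ⟨h.curve_square hc.1, h.above_square hc.2⟩

end GrowthData

end

/-- An odd polynomial solution of the Hermite equation `y'' - 2 x y' + 2 k y = 0` with `k > 0`
and `y' 0 ≠ 0`. -/
structure IsOddHermiteSolution (p : ℝ[X]) (k : ℝ) : Prop where
  odd : ∀ x, p.eval (-x) = -p.eval x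
  pos : 0 < k
  ode : p.derivative.derivative = C 2 * X * p.derivative - C (2 * k) * p
  deriv_zero : p.derivative.eval 0 ≠ 0

theorem Polynomial.eval_neg_or_eval_pos (q : ℝ[X]) {a b : ℝ} (h : ∀ x ∈ Ioo a b, q.eval x ≠ 0) :
    (∀ x ∈ Ioo a b, q.eval x < 0) ∨ ∀ x ∈ Ioo a b, 0 < q.eval x := by
  by_contra! hcon
  obtain ⟨⟨x, hx, hx0⟩, y, hy, hy0⟩ := hcon
  have := (convex_Ioo a b).isPreconnected.intermediate_value hy hx
    (f := fun x => q.eval x) (by fun_prop) ⟨hy0, hx0⟩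
  obtain ⟨z, hz, hz0⟩ := this
  exact h z hz hz0

theorem Polynomial.strictMonoOn_Icc {p : ℝ[X]} {a b : ℝ}
    (h : ∀ x ∈ Ioo a b, 0 < p.derivative.eval x) : StrictMonoOn (fun x => p.eval x) (Icc a b) := by
  refine strictMonoOn_of_deriv_pos (convex_Icc a b) (by fun_prop) fun x hx => ?_
  rw [interior_Icc] at hx
  rw [Polynomial.deriv]
  exact h x hx

theorem Polynomial.strictAntiOn_Icc {p : ℝ[X]} {a b : ℝ}
    (h : ∀ x ∈ Ioo a b, p.derivative.eval x < 0) : StrictAntiOn (fun x => p.eval x) (Icc a b) := by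
  refine strictAntiOn_of_deriv_neg (convex_Icc a b) (by fun_prop) fun x hx => ?_
  rw [interior_Icc] at hx
  rw [Polynomial.deriv]
  exact h x hx

namespace IsOddHermiteSolution

variable {p : ℝ[X]} {k L : ℝ}

theorem neg (h : IsOddHermiteSolution p k) : IsOddHermiteSolution (-p) k where
  odd x := by simp [h.odd]
  pos := h.pos
  ode := by simp only [derivative_neg, h.ode]; ring
  deriv_zero := by simpa using h.deriv_zero

theorem derivative_even (h : IsOddHermiteSolution p k) (x : ℝ) :
    p.derivative.eval (-x) = p.derivative.eval x := by
  have h1 : p.comp (-X) = -p := Polynomial.funext fun x => by simp [h.odd]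
  have h2 := congrArg (fun q => (derivative q).eval x) h1
  simpa [derivative_comp] using h2

theorem derivative_ne_zero (h : IsOddHermiteSolution p k) : p.derivative ≠ 0 := fun h0 =>
  h.deriv_zero (by simp [h0])

theorem eval_zero (h : IsOddHermiteSolution p k) : p.eval 0 = 0 := by
  have := h.odd 0
  rw [neg_zero] at this
  linarith

/-- The energy `p ^ 2 + p' ^ 2 / (2 k)` is strictly increasing on the positive half-line. -/
theorem strictMonoOn_energy (h : IsOddHermiteSolution p k) :
    StrictMonoOn (fun x => p.eval x ^ 2 + p.derivative.eval x ^ 2 / (2 * k)) (Ici 0) := by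
  have hk := h.pos
  set q : ℝ[X] := p ^ 2 + C (1 / (2 * k)) * p.derivative ^ 2 with hq
  have hq' : ∀ x, p.eval x ^ 2 + p.derivative.eval x ^ 2 / (2 * k) = q.eval x := fun x => by
    simp [hq]; ring
  have hdq : derivative q = C (2 / k) * X * p.derivative ^ 2 := by
    have : derivative q = C 2 * p * p.derivative +
        C (1 / (2 * k)) * (C 2 * p.derivative * p.derivative.derivative) := by
      simp [hq, derivative_pow]
    rw [this, h.ode]
    have e1 : (C (2 / k) : ℝ[X]) = C (1 / (2 * k)) * (C 2 * C 2) := by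
      rw [← C_mul, ← C_mul]; congr 1; field_simp
    have e2 : (C 2 : ℝ[X]) = C (1 / (2 * k)) * (C 2 * C (2 * k)) := by
      rw [← C_mul, ← C_mul]; congr 1; field_simp
    rw [e1]
    linear_combination (p * p.derivative) * e2
  have hmono : MonotoneOn (fun x => q.eval x) (Ici 0) := by
    refine monotoneOn_of_deriv_nonneg (convex_Ici 0) (by fun_prop) (by fun_prop) fun x hx => ?_
    rw [interior_Ici] at hx
    have hx : 0 < x := hx
    rw [Polynomial.deriv, hdq]
    simp only [eval_mul, eval_C, eval_X, eval_pow]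
    positivity
  simp only [hq']
  intro a ha b hb hab
  refine (hmono ha hb hab.le).lt_of_ne fun heq => ?_
  have hconst : q = C (q.eval a) := by
    refine Polynomial.eq_of_infinite_eval_eq _ _ ((Icc_infinite hab).mono fun x hx => ?_)
    have hx0 : x ∈ Ici (0 : ℝ) := le_trans ha hx.1
    have h1 := hmono ha hx0 hx.1
    have h2 := hmono hx0 hb hx.2
    simp only [mem_ofPred_eq, eval_C] at h1 h2 heq ⊢
    linarith
  have h0 : derivative q = 0 := by rw [hconst, derivative_C]
  rw [hdq] at h0
  have : (C (2 / k) : ℝ[X]) ≠ 0 := by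
    rw [Ne, C_eq_zero]; positivity
  exact mul_ne_zero (mul_ne_zero this X_ne_zero) (pow_ne_zero 2 h.derivative_ne_zero) h0

theorem abs_eval_abs (h : IsOddHermiteSolution p k) (x : ℝ) : abs (p.eval |x|) = |p.eval x| := by
  rcases abs_choice x with hx | hx <;> rw [hx]
  rw [h.odd, abs_neg]

theorem derivative_eval_abs (h : IsOddHermiteSolution p k) (x : ℝ) :
    p.derivative.eval |x| = p.derivative.eval x := by
  rcases abs_choice x with hx | hx <;> rw [hx]
  rw [h.derivative_even]

theorem abs_eval_lt (h : IsOddHermiteSolution p k) {x c : ℝ} (hx : |x| < c)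
    (hc : p.derivative.eval c = 0) : |p.eval x| < |p.eval c| := by
  rw [← h.abs_eval_abs x]
  have := h.strictMonoOn_energy (abs_nonneg x) ((abs_nonneg x).trans hx.le) hx
  simp only [hc] at this
  have hk := h.pos
  have h2 : 0 ≤ p.derivative.eval |x| ^ 2 / (2 * k) := by positivity
  exact sq_lt_sq.mp (by norm_num at this; linarith)

theorem abs_eval_le (h : IsOddHermiteSolution p k) {x c : ℝ} (hx : |x| ≤ c)
    (hc : c = 0 ∨ p.derivative.eval c = 0) : |p.eval x| ≤ |p.eval c| := by
  rcases hx.eq_or_lt with hx' | hx'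
  · rw [← hx', h.abs_eval_abs]
  · rcases hc with rfl | hc
    · exact absurd hx' (abs_nonneg x).not_gt
    · exact (h.abs_eval_lt hx' hc).le

theorem derivative_pos_right (h : IsOddHermiteSolution p k) {c d : ℝ}
    (hcd : c < d) (hc : p.derivative.eval c = 0) (hneg : p.eval c < 0)
    (hne : ∀ x ∈ Ioo c d, p.derivative.eval x ≠ 0) : ∀ x ∈ Ioo c d, 0 < p.derivative.eval x := by
  refine (p.derivative.eval_neg_or_eval_pos hne).resolve_left fun hlt => ?_
  have hk := h.pos
  have hpos : 0 < p.derivative.derivative.eval c := by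
    rw [h.ode]
    simp only [eval_sub, eval_mul, eval_C, eval_X, hc]
    nlinarith
  have hderiv : deriv (fun x => p.derivative.eval x) c > 0 := by rwa [Polynomial.deriv]
  have hev := eventually_nhdsWithin_sign_eq_of_deriv_pos hderiv hc
  obtain ⟨x, hx, hx'⟩ := ((hev.filter_mono nhdsWithin_le_nhds).and
    (Ioo_mem_nhdsGT hcd)).exists
  have := hlt x hx'
  rw [sign_neg this, sign_pos (sub_pos.mpr hx'.1)] at hx
  exact absurd hx (by decide)

theorem squareConnected_of_critical (h : IsOddHermiteSolution p k) (hL : 1 < L) {e c d : ℝ}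
    (he0 : 0 ≤ e) (hec : e < c) (hcd : c < d) (hc : p.derivative.eval c = 0) (hneg : p.eval c < 0)
    (he : e = 0 ∨ p.derivative.eval e = 0)
    (hne : ∀ x ∈ Ioo e c, p.derivative.eval x ≠ 0) (hne' : ∀ x ∈ Ioo c d, p.derivative.eval x ≠ 0)
    (hlt : L * |p.eval e| < |p.eval c|) (hlt' : L * |p.eval c| < |p.eval d|)
    (hconn : SquareConnected (fun x => p.eval x) L c) :
    SquareConnected (fun x => p.eval x) L d := by
  have habs := abs_of_neg hneg
  have hmono := strictMonoOn_Icc (h.derivative_pos_right hcd hc hneg hne')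
  have hanti : StrictAntiOn (fun x => p.eval x) (Icc e c) := by
    refine strictAntiOn_Icc ((p.derivative.eval_neg_or_eval_pos hne).resolve_right fun hgt => ?_)
    have := strictMonoOn_Icc hgt ⟨le_rfl, hec.le⟩ ⟨hec.le, le_rfl⟩ hec
    have h1 := neg_abs_le (p.eval e)
    have h2 := abs_nonneg (p.eval e)
    simp only at this
    nlinarith
  have hd := hmono ⟨le_rfl, hcd.le⟩ ⟨hcd.le, le_rfl⟩ hcd
  simp only at hd
  refine GrowthData.squareConnected (e := e) (c := c)
    ⟨h.odd, by fun_prop, hL, he0, hec, hcd, hmono, hanti, hneg, fun x hx => ?_, fun x hx => ?_, ?_⟩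
    hconn
  · have := h.abs_eval_le (abs_le.mpr hx) he
    nlinarith
  · exact habs ▸ h.abs_eval_le (abs_le.mpr hx) (Or.inr hc)
  · rcases le_total (p.eval d) 0 with h0 | h0
    · rw [abs_of_nonpos h0, habs] at hlt'
      nlinarith
    · rwa [abs_of_nonneg h0, habs] at hlt'

theorem finite_critical (h : IsOddHermiteSolution p k) :
    {x | 0 < x ∧ p.derivative.eval x = 0}.Finite := by
  refine p.derivative.roots.toFinset.finite_toSet.subset fun x hx => ?_
  simp only [Finset.mem_coe, Multiset.mem_toFinset]
  exact (mem_roots h.derivative_ne_zero).mpr hx.2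

theorem squareConnected (h : IsOddHermiteSolution p k) (hL : 1 < L)
    (hgap : ∀ c c', 0 < c → c < c' → p.derivative.eval c = 0 → p.derivative.eval c' = 0 →
      L * |p.eval c| < |p.eval c'|) {d : ℝ} (hd0 : 0 < d)
    (hd : ∀ c, 0 < c → c < d → p.derivative.eval c = 0 → L * |p.eval c| < |p.eval d|) :
    SquareConnected (fun x => p.eval x) L d := by
  set K : Set ℝ := {x | 0 < x ∧ p.derivative.eval x = 0} with hK
  have hfin : K.Finite := h.finite_critical
  have hmax : ∀ b, (∀ c ∈ K, ¬ c < b) ∨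
      ∃ c ∈ K, c < b ∧ ∀ x ∈ Ioo c b, p.derivative.eval x ≠ 0 := by
    intro b
    rcases (K ∩ Iio b).eq_empty_or_nonempty with h0 | h0
    · left
      intro c hc hcb
      exact (h0 ▸ (⟨hc, hcb⟩ : c ∈ K ∩ Iio b) : c ∈ (∅ : Set ℝ))
    · right
      obtain ⟨c, ⟨hcK, hcb⟩, hcmax⟩ := (hfin.inter_of_left (Iio b)).exists_maximal h0
      refine ⟨c, hcK, hcb, fun x hx hx0 => ?_⟩
      exact absurd (hcmax ⟨⟨hcK.1.trans hx.1, hx0⟩, hx.2⟩ hx.1.le) hx.1.not_ge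
  rcases hmax d with hno | ⟨c, hcK, hcd, hne'⟩
  · have hne : ∀ x ∈ Ioo (-d) d, p.derivative.eval x ≠ 0 := by
      intro x hx hx0
      have hx' : x ≠ 0 := by rintro rfl; exact h.deriv_zero hx0
      exact hno |x| ⟨abs_pos.mpr hx', by rw [h.derivative_eval_abs, hx0]⟩ (abs_lt.mpr hx)
    rcases p.derivative.eval_neg_or_eval_pos hne with hs | hs
    · refine SquareConnected.of_neg h.odd (SquareConnected.of_strictMonoOn (fun x => ?_)
        (by fun_prop) hL hd0 ?_)
      · simp only [h.odd]
      · exact fun x hx y hy hxy => neg_lt_neg (strictAntiOn_Icc hs hx hy hxy)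
    · exact SquareConnected.of_strictMonoOn h.odd (by fun_prop) hL hd0 (strictMonoOn_Icc hs)
  · have hconn : SquareConnected (fun x => p.eval x) L c :=
      squareConnected h hL hgap hcK.1 fun x hx hxc hx0 => hgap x c hx hxc hx0 hcK.2
    obtain ⟨e, he0, hec, he, hne, hlt⟩ : ∃ e, 0 ≤ e ∧ e < c ∧
        (e = 0 ∨ p.derivative.eval e = 0) ∧ (∀ x ∈ Ioo e c, p.derivative.eval x ≠ 0) ∧
        L * |p.eval e| < |p.eval c| := by
      rcases hmax c with hno | ⟨e, heK, hec, hne⟩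
      · refine ⟨0, le_rfl, hcK.1, Or.inl rfl, fun x hx hx0 => hno x ⟨hx.1, hx0⟩ hx.2, ?_⟩
        rw [h.eval_zero, abs_zero, mul_zero]
        exact (abs_nonneg _).trans_lt (h.abs_eval_lt (by simpa using hcK.1) hcK.2 (x := 0))
      · exact ⟨e, heK.1.le, hec, Or.inr heK.2, hne, hgap e c heK.1 hec heK.2 hcK.2⟩
    have hlt' := hd c hcK.1 hcd hcK.2
    have hc0 : 0 < |p.eval c| := (abs_nonneg _).trans_lt
      (h.abs_eval_lt (by simpa using hcK.1) hcK.2 (x := 0))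
    rcases (abs_pos.mp hc0).lt_or_gt with hneg | hpos
    · exact h.squareConnected_of_critical hL he0 hec hcd hcK.2 hneg he hne hne' hlt hlt' hconn
    · refine SquareConnected.of_neg h.odd ?_
      have := h.neg.squareConnected_of_critical hL he0 hec hcd (by simpa using hcK.2)
        (by simpa using hpos) (by simpa using he) (by simpa using hne) (by simpa using hne')
        (by simpa using hlt) (by simpa using hlt') (by
          have h2 := SquareConnected.of_neg (g := fun x => -p.eval x) (L := L) (r := c)
            (fun x => by simp [h.odd]) (by simpa using hconn)
          simpa using h2)
      simpa using this
termination_by ({x | 0 < x ∧ p.derivative.eval x = 0} ∩ Iio d).ncard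
decreasing_by
  refine Set.ncard_lt_ncard ⟨fun x hx => ⟨hx.1, hx.2.trans hcd⟩, fun hsub => ?_⟩
    (h.finite_critical.inter_of_left _)
  exact lt_irrefl c (hsub ⟨hcK, hcd⟩).2

end IsOddHermiteSolution

namespace IsOddHermiteSolution

variable {p : ℝ[X]} {k L : ℝ}

theorem tendsto_abs_eval (h : IsOddHermiteSolution p k) :
    Filter.Tendsto (fun x => |p.eval x|) Filter.atTop Filter.atTop := by
  refine p.abs_tendsto_atTop ?_
  by_contra hdeg
  have := eq_C_of_degree_le_zero (not_lt.mp hdeg)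
  exact h.derivative_ne_zero (by rw [this, derivative_C])

/-- The modulus of the critical values strictly increases with the modulus of the critical points,
with a ratio bounded away from `1`. -/
theorem exists_gap (h : IsOddHermiteSolution p k) : ∃ L₀ > 1, ∀ L < L₀, ∀ x y, |x| < |y| →
    p.derivative.eval x = 0 → p.derivative.eval y = 0 → L * |p.eval x| < |p.eval y| := by
  have hfin : {x | p.derivative.eval x = 0}.Finite :=
    p.derivative.roots.toFinset.finite_toSet.subset fun x hx => by
      simp only [Finset.mem_coe, Multiset.mem_toFinset]
      exact (mem_roots h.derivative_ne_zero).mpr hx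
  have hev : ∀ᶠ L in nhds (1 : ℝ), ∀ x ∈ {x | p.derivative.eval x = 0},
      ∀ y ∈ {x | p.derivative.eval x = 0}, |x| < |y| → L * |p.eval x| < |p.eval y| := by
    refine (Filter.eventually_all_finite hfin).mpr fun x hx =>
      (Filter.eventually_all_finite hfin).mpr fun y hy => ?_
    by_cases hxy : |x| < |y|
    · have hlt : 1 * |p.eval x| < |p.eval y| := by
        rw [one_mul, ← h.abs_eval_abs y]
        exact h.abs_eval_lt hxy (by rw [h.derivative_eval_abs]; exact hy)
      have hc : ContinuousAt (fun L : ℝ => L * |p.eval x|) 1 := by fun_prop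
      filter_upwards [hc.eventually (gt_mem_nhds hlt)] with L hL _ using hL
    · exact Filter.Eventually.of_forall fun _ h => absurd h hxy
  obtain ⟨ε, hε, hball⟩ := Metric.eventually_nhds_iff.mp hev
  refine ⟨1 + ε, by linarith, fun L hL x y hxy hx hy => ?_⟩
  have h1 := hball (y := 1 + ε / 2) (by
    rw [Real.dist_eq]; rw [abs_of_pos] <;> linarith)
  rcases le_or_gt L 1 with hL1 | hL1
  · have h2 := hball (y := 1) (by simpa using hε) x hx y hy hxy
    have := abs_nonneg (p.eval x)
    nlinarith
  · exact hball (y := L) (by rw [Real.dist_eq, abs_of_pos] <;> linarith) x hx y hy hxy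

theorem exists_squareConnected (h : IsOddHermiteSolution p k) (hL : 1 < L)
    (hgap : ∀ x y, |x| < |y| → p.derivative.eval x = 0 → p.derivative.eval y = 0 →
      L * |p.eval x| < |p.eval y|) :
    ∃ M, ∀ d, M ≤ d → SquareConnected (fun x => p.eval x) L d := by
  have hev : ∀ᶠ d in Filter.atTop, ∀ c ∈ {x | 0 < x ∧ p.derivative.eval x = 0},
      L * |p.eval c| < |p.eval d| :=
    (Filter.eventually_all_finite h.finite_critical).mpr fun c _ =>
      h.tendsto_abs_eval.eventually (Filter.eventually_gt_atTop _)
  obtain ⟨M, hM⟩ := Filter.eventually_atTop.mp (hev.and (Filter.eventually_gt_atTop 0))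
  refine ⟨M, fun d hd => h.squareConnected hL (fun c c' hc hcc' => ?_) (hM d hd).2
    fun c hc0 _ hc => (hM d hd).1 c ⟨hc0, hc⟩⟩
  exact hgap c c' (by rwa [abs_of_pos hc, abs_of_pos (hc.trans hcc')])

theorem isPreconnected_of_squares {S : Set (ℝ × ℝ)} {M : ℝ}
    (hS : ∀ d, M ≤ d → IsPreconnected (S ∩ square d)) : IsPreconnected S := by
  refine isPreconnected_of_forall_pair fun x hx y hy => ?_
  set d := max M (max (max |x.1| |x.2|) (max |y.1| |y.2|))
  have hmem : ∀ z : ℝ × ℝ, |z.1| ≤ d → |z.2| ≤ d → z ∈ square d := fun z h1 h2 =>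
    ⟨abs_le.mp h1, abs_le.mp h2⟩
  exact ⟨S ∩ square d, inter_subset_left, ⟨hx, hmem x (by simp [d]) (by simp [d])⟩,
    ⟨hy, hmem y (by simp [d]) (by simp [d])⟩, hS d (le_max_left _ _)⟩

theorem isConnected_levelCurve (h : IsOddHermiteSolution p k) (hL : 1 < L)
    (hgap : ∀ x y, |x| < |y| → p.derivative.eval x = 0 → p.derivative.eval y = 0 →
      L * |p.eval x| < |p.eval y|) :
    IsConnected (levelCurve (fun x => p.eval x) L) := by
  obtain ⟨M, hM⟩ := h.exists_squareConnected hL hgap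
  exact ⟨⟨(0, 0), by simp [levelCurve, h.eval_zero]⟩,
    isPreconnected_of_squares fun d hd => (hM d hd).1⟩

theorem isConnected_levelAbove (h : IsOddHermiteSolution p k) (hL : 1 < L)
    (hgap : ∀ x y, |x| < |y| → p.derivative.eval x = 0 → p.derivative.eval y = 0 →
      L * |p.eval x| < |p.eval y|) :
    IsConnected (levelAbove (fun x => p.eval x) L) := by
  obtain ⟨M, hM⟩ := h.exists_squareConnected hL hgap
  refine ⟨?_, isPreconnected_of_squares fun d hd => (hM d hd).2⟩
  obtain ⟨y, hy⟩ := (h.tendsto_abs_eval.eventually (Filter.eventually_gt_atTop 0)).exists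
  rcases (abs_pos.mp hy).lt_or_gt with h0 | h0
  · refine ⟨(0, -y), ?_⟩
    simpa [levelAbove, h.eval_zero, h.odd] using h0
  · refine ⟨(0, y), ?_⟩
    simpa [levelAbove, h.eval_zero] using h0

/-- Two critical points with values in ratio `L` do not exist. -/
theorem mul_abs_eval_ne (h : IsOddHermiteSolution p k) (hL : 1 < L)
    (hgap : ∀ x y, |x| < |y| → p.derivative.eval x = 0 → p.derivative.eval y = 0 →
      L * |p.eval x| < |p.eval y|) {x y : ℝ}
    (hx : p.derivative.eval x = 0) (hy : p.derivative.eval y = 0) :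
    L * |p.eval x| ≠ |p.eval y| := by
  have hpos : 0 < |p.eval x| := by
    have hx0 : x ≠ 0 := by rintro rfl; exact h.deriv_zero hx
    rw [← h.abs_eval_abs x]
    exact (abs_nonneg _).trans_lt (h.abs_eval_lt (x := 0) (by simpa using hx0)
      (by rw [h.derivative_eval_abs, hx]))
  rcases lt_trichotomy |x| |y| with hxy | hxy | hxy
  · exact (hgap x y hxy hx hy).ne
  · rw [← h.abs_eval_abs y, ← hxy, h.abs_eval_abs]
    nlinarith
  · have := hgap y x hxy hy hx
    have := abs_nonneg (p.eval y)
    nlinarith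

end IsOddHermiteSolution

theorem hermiteH_eval_neg (n : ℕ) (x : ℝ) :
    (hermiteH n).eval (-x) = (-1) ^ n * (hermiteH n).eval x := by
  induction n using Nat.twoStepInduction with
  | zero => simp [hermiteH]
  | one => simp [hermiteH]
  | more n ih1 ih2 =>
    simp only [hermiteH, eval_sub, eval_mul, eval_C, eval_X, ih1, ih2]
    ring

theorem derivative_hermiteH_succ (n : ℕ) :
    derivative (hermiteH (n + 1)) = C (2 * (n + 1 : ℝ)) * hermiteH n := by
  induction n using Nat.twoStepInduction with
  | zero => simp [hermiteH]
  | one =>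
    simp only [hermiteH, derivative_sub, derivative_mul, derivative_X, C_mul, C_add,
      map_natCast, map_ofNat, map_one]
    simp
    ring
  | more n ih1 ih2 =>
    rw [hermiteH]
    simp only [derivative_sub, derivative_mul, derivative_C, derivative_X, ih1, ih2]
    rw [hermiteH]
    simp only [C_mul, C_add, map_natCast, map_ofNat, map_one]
    push_cast
    ring

theorem hermiteH_ode (n : ℕ) : derivative (derivative (hermiteH (n + 1))) =
    C 2 * X * derivative (hermiteH (n + 1)) - C (2 * (n + 1 : ℝ)) * hermiteH (n + 1) := by
  cases n with
  | zero => simp [hermiteH]; ring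
  | succ n =>
    rw [derivative_hermiteH_succ, derivative_mul, derivative_C, derivative_hermiteH_succ, hermiteH]
    simp only [C_mul, C_add, map_natCast, map_ofNat, map_one]
    push_cast
    ring

theorem hermiteH_eval_zero_ne_zero (m : ℕ) : (hermiteH (2 * m)).eval 0 ≠ 0 := by
  induction m with
  | zero => simp [hermiteH]
  | succ m ih =>
    rw [show 2 * (m + 1) = 2 * m + 2 by ring, hermiteH]
    simp only [eval_sub, eval_mul, eval_C, eval_X, mul_zero, zero_mul, zero_sub]
    exact neg_ne_zero.mpr (mul_ne_zero (by positivity) ih)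

theorem isOddHermiteSolution_hermiteH {n : ℕ} (hodd : Odd n) :
    IsOddHermiteSolution (hermiteH n) n := by
  obtain ⟨m, rfl⟩ := hodd
  refine ⟨fun x => ?_, by positivity, ?_, ?_⟩
  · rw [hermiteH_eval_neg, Odd.neg_one_pow ⟨m, rfl⟩, neg_one_mul]
  · rw [hermiteH_ode]; push_cast; rfl
  · rw [derivative_hermiteH_succ]
    simp only [eval_mul, eval_C]
    exact mul_ne_zero (by positivity) (hermiteH_eval_zero_ne_zero m)

/-- A continuous function whose positive and negative sets are connected has two nodal domains. -/
theorem ncard_nodalDomains_eq_two {u : ℝ × ℝ → ℝ} (hu : Continuous u)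
    (hpos : IsConnected {p | 0 < u p}) (hneg : IsConnected {p | u p < 0}) :
    (nodalDomains u).ncard = 2 := by
  have ho1 : IsOpen {p | 0 < u p} := isOpen_lt continuous_const hu
  have ho2 : IsOpen {p | u p < 0} := isOpen_lt hu continuous_const
  have hdisj : Disjoint {p | 0 < u p} {p | u p < 0} :=
    disjoint_left.mpr fun p h1 h2 => lt_asymm (show 0 < u p from h1) h2
  have hcov : {p | u p ≠ 0} ⊆ {p | 0 < u p} ∪ {p | u p < 0} := fun p hp =>
    (lt_or_gt_of_ne (show u p ≠ 0 from hp)).symm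
  have hP : ∀ p, 0 < u p → connectedComponentIn {q | u q ≠ 0} p = {p | 0 < u p} := by
    refine fun p hp => subset_antisymm ?_ ?_
    · exact isPreconnected_connectedComponentIn.subset_left_of_subset_union ho1 ho2 hdisj
        ((connectedComponentIn_subset _ _).trans hcov)
        ⟨p, mem_connectedComponentIn hp.ne', hp⟩
    · exact hpos.isPreconnected.subset_connectedComponentIn hp
        fun q hq => (show 0 < u q from hq).ne'
  have hN : ∀ p, u p < 0 → connectedComponentIn {q | u q ≠ 0} p = {p | u p < 0} := by
    refine fun p hp => subset_antisymm ?_ ?_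
    · exact isPreconnected_connectedComponentIn.subset_right_of_subset_union ho1 ho2 hdisj
        ((connectedComponentIn_subset _ _).trans hcov)
        ⟨p, mem_connectedComponentIn hp.ne, hp⟩
    · exact hneg.isPreconnected.subset_connectedComponentIn hp
        fun q hq => (show u q < 0 from hq).ne
  obtain ⟨a, ha⟩ := hpos.nonempty
  obtain ⟨b, hb⟩ := hneg.nonempty
  have : nodalDomains u = {{p | 0 < u p}, {p | u p < 0}} := by
    ext S
    constructor
    · rintro ⟨p, hp, rfl⟩
      rcases lt_or_gt_of_ne hp with h | h
      · exact Or.inr (hN p h)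
      · exact Or.inl (hP p h)
    · rintro (rfl | rfl)
      · exact ⟨a, (show 0 < u a from ha).ne', (hP a ha).symm⟩
      · exact ⟨b, (show u b < 0 from hb).ne, (hN b hb).symm⟩
  rw [this, ncard_pair]
  intro heq
  exact lt_asymm (show 0 < u a from ha) (show a ∈ {p | u p < 0} from heq ▸ ha)

theorem continuous_Phi (n : ℕ) (θ : ℝ) : Continuous (Phi n θ) := by
  unfold Phi; fun_prop

theorem differentiable_Phi (n : ℕ) (θ : ℝ) : Differentiable ℝ (Phi n θ) := by
  unfold Phi; fun_prop

theorem IsCriticalZero.derivative_eq_zero {n : ℕ} {θ : ℝ} (hs : sin θ ≠ 0) (hc : cos θ ≠ 0)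
    {p : ℝ × ℝ} (hp : IsCriticalZero (Phi n θ) p) :
    cos θ * (hermiteH n).eval p.1 + sin θ * (hermiteH n).eval p.2 = 0 ∧
      (derivative (hermiteH n)).eval p.1 = 0 ∧ (derivative (hermiteH n)).eval p.2 = 0 := by
  obtain ⟨h0, h1⟩ := hp
  have hval : cos θ * (hermiteH n).eval p.1 + sin θ * (hermiteH n).eval p.2 = 0 :=
    (mul_eq_zero.mp h0).resolve_right (exp_ne_zero _)
  have hF : HasFDerivAt (Phi n θ) (0 : ℝ × ℝ →L[ℝ] ℝ) p :=
    h1 ▸ (differentiable_Phi n θ p).hasFDerivAt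
  refine ⟨hval, ?_, ?_⟩
  · have hd := HasFDerivAt.comp_hasDerivAt p.1 (f := fun t => (t, p.2)) hF
      ((hasDerivAt_id p.1).prodMk (hasDerivAt_const p.1 p.2))
    have hd' := ((((hermiteH n).hasDerivAt p.1).const_mul (cos θ)).add_const
      (sin θ * (hermiteH n).eval p.2)).mul
      (((((hasDerivAt_id p.1).pow 2).add_const (p.2 ^ 2)).neg.div_const 2).exp)
    have := hd.unique hd'
    simp only [id, hval, zero_mul, add_zero] at this
    simpa [hc, exp_ne_zero] using this
  · have hd := HasFDerivAt.comp_hasDerivAt p.2 (f := fun t => (p.1, t)) hF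
      ((hasDerivAt_const p.2 p.1).prodMk (hasDerivAt_id p.2))
    have hd' := ((((hermiteH n).hasDerivAt p.2).const_mul (sin θ)).const_add
      (cos θ * (hermiteH n).eval p.1)).mul
      (((((hasDerivAt_id p.2).pow 2).const_add (p.1 ^ 2)).neg.div_const 2).exp)
    have := hd.unique hd'
    simp only [id, hval, zero_mul, add_zero] at this
    simpa [hs, exp_ne_zero] using this

/-- After a change of variables `T` and up to a positive factor, `Phi n θ` is
`hermiteH n y - L * hermiteH n x`. -/
theorem connected_of_change_of_variables {n : ℕ} {θ L : ℝ} (hodd : Odd n) (hL : 1 < L)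
    (hgap : ∀ x y, |x| < |y| → (derivative (hermiteH n)).eval x = 0 →
      (derivative (hermiteH n)).eval y = 0 → L * |(hermiteH n).eval x| < |(hermiteH n).eval y|)
    (T T' : ℝ × ℝ → ℝ × ℝ) (hT' : Continuous T') (hTT' : Function.LeftInverse T T')
    (hT'T : Function.LeftInverse T' T) {a : ℝ} (ha : 0 < a)
    (heq : ∀ x y, cos θ * (hermiteH n).eval x + sin θ * (hermiteH n).eval y =
      a * ((hermiteH n).eval (T (x, y)).2 - L * (hermiteH n).eval (T (x, y)).1)) :
    IsConnected (nodalSet (Phi n θ)) ∧ (nodalDomains (Phi n θ)).ncard = 2 := by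
  have h := isOddHermiteSolution_hermiteH hodd
  have hPhi : ∀ p, Phi n θ p = a * exp (-(p.1 ^ 2 + p.2 ^ 2) / 2) *
      ((hermiteH n).eval (T p).2 - L * (hermiteH n).eval (T p).1) := fun p => by
    rw [Phi, heq]; ring
  have hpos : ∀ p : ℝ × ℝ, 0 < a * exp (-(p.1 ^ 2 + p.2 ^ 2) / 2) := fun p => by positivity
  have himg : ∀ S : Set (ℝ × ℝ), IsConnected S → IsConnected (T ⁻¹' S) := fun S hS => by
    rw [← image_eq_preimage_of_inverse hTT' hT'T]
    exact hS.image T' hT'.continuousOn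
  have habove := h.isConnected_levelAbove hL hgap
  refine ⟨?_, ncard_nodalDomains_eq_two (continuous_Phi n θ) ?_ ?_⟩
  · convert himg _ (h.isConnected_levelCurve hL hgap) using 1
    ext p
    simp only [nodalSet, levelCurve, mem_ofPred_eq, mem_preimage, hPhi]
    rw [mul_eq_zero_iff_left (hpos p).ne', sub_eq_zero, eq_comm]
  · convert himg _ habove using 1
    ext p
    simp only [levelAbove, mem_ofPred_eq, mem_preimage, hPhi, mul_pos_iff_of_pos_left (hpos p),
      sub_pos]
  · convert himg _ (habove.image (fun p => -p) continuous_neg.continuousOn) using 1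
    ext p
    rw [image_neg_eq_neg]
    simp only [levelAbove, mem_ofPred_eq, mem_preimage, hPhi, Set.mem_neg, Prod.fst_neg,
      Prod.snd_neg, h.odd, mul_neg, neg_lt_neg_iff]
    rw [← neg_pos, ← mul_neg, mul_pos_iff_of_pos_left (hpos p), neg_pos, sub_neg]

theorem not_isCriticalZero_and_connected {n : ℕ} (hodd : Odd n) {L₀ θ : ℝ}
    (hgap : ∀ L < L₀, ∀ x y, |x| < |y| → (derivative (hermiteH n)).eval x = 0 →
      (derivative (hermiteH n)).eval y = 0 → L * |(hermiteH n).eval x| < |(hermiteH n).eval y|)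
    (hs : 0 < sin θ) (hc : cos θ ≠ 0) (hsc : sin θ < L₀ * |cos θ|) (hcs : |cos θ| < L₀ * sin θ)
    (hne : |cos θ| ≠ sin θ) :
    (∀ p : ℝ × ℝ, ¬ IsCriticalZero (Phi n θ) p) ∧
      IsConnected (nodalSet (Phi n θ)) ∧ (nodalDomains (Phi n θ)).ncard = 2 := by
  have h := isOddHermiteSolution_hermiteH hodd
  have hc' : 0 < |cos θ| := abs_pos.mpr hc
  constructor
  · intro p hp
    obtain ⟨h0, h1, h2⟩ := hp.derivative_eq_zero hs.ne' hc
    have h3 : |cos θ| * |(hermiteH n).eval p.1| = sin θ * |(hermiteH n).eval p.2| := by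
      rw [← abs_mul, eq_neg_of_add_eq_zero_left h0, abs_neg, abs_mul, abs_of_pos hs]
    rcases hne.lt_or_gt with hlt | hlt
    · refine h.mul_abs_eval_ne ((one_lt_div hc').mpr hlt)
        (hgap _ ((div_lt_iff₀ hc').mpr hsc)) h2 h1 ?_
      field_simp
      linarith
    · refine h.mul_abs_eval_ne ((one_lt_div hs).mpr hlt)
        (hgap _ ((div_lt_iff₀ hs).mpr hcs)) h1 h2 ?_
      field_simp
      linarith
  · rcases hne.lt_or_gt with hlt | hlt
    · have hL := (one_lt_div hc').mpr hlt
      have hgap' := hgap _ ((div_lt_iff₀ hc').mpr hsc)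
      rcases hc.lt_or_gt with hneg | hpos
      · refine connected_of_change_of_variables hodd hL hgap' (fun p => (-p.2, -p.1))
          (fun p => (-p.2, -p.1)) (by fun_prop) (fun p => by simp) (fun p => by simp) hc' fun x y => ?_
        simp only [h.odd, abs_of_neg hneg]
        field_simp
        ring
      · refine connected_of_change_of_variables hodd hL hgap' (fun p => (-p.2, p.1))
          (fun p => (p.2, -p.1)) (by fun_prop) (fun p => by simp) (fun p => by simp) hc' fun x y => ?_
        simp only [h.odd, abs_of_pos hpos]
        field_simp
        ring
    · have hL := (one_lt_div hs).mpr hlt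
      have hgap' := hgap _ ((div_lt_iff₀ hs).mpr hcs)
      rcases hc.lt_or_gt with hneg | hpos
      · refine connected_of_change_of_variables hodd hL hgap' id id
          continuous_id (fun p => rfl) (fun p => rfl) hs fun x y => ?_
        simp only [id, abs_of_neg hneg]
        field_simp
        ring
      · refine connected_of_change_of_variables hodd hL hgap' (fun p => (-p.1, p.2))
          (fun p => (-p.1, p.2)) (by fun_prop) (fun p => by simp) (fun p => by simp) hs fun x y => ?_
        simp only [h.odd, abs_of_pos hpos]
        field_simp
        ring

/-- Near an angle `α` in `(0, π)` with `|cos α| = sin α`, the ratio of `|cos θ|` and `sin θ` is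
close to `1`. -/
theorem exists_interval_ratio_lt {L₀ α : ℝ} (hL : 1 < L₀) (hs : 0 < sin α)
    (hsc : |cos α| = sin α) : ∃ ε > 0, ∀ θ ∈ Ioo (α - ε) (α + ε),
      0 < sin θ ∧ cos θ ≠ 0 ∧ sin θ < L₀ * |cos θ| ∧ |cos θ| < L₀ * sin θ := by
  have hlt : |cos α| < L₀ * sin α := by rw [hsc]; nlinarith
  have hlt' : sin α < L₀ * |cos α| := by rw [hsc]; nlinarith
  have h1 : ∀ᶠ θ in nhds α, 0 < sin θ := continuous_sin.continuousAt.eventually (lt_mem_nhds hs)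
  have h2 : ∀ᶠ θ in nhds α, |cos θ| < L₀ * sin θ :=
    ContinuousAt.eventually_lt (by fun_prop) (by fun_prop) hlt
  have h3 : ∀ᶠ θ in nhds α, sin θ < L₀ * |cos θ| :=
    ContinuousAt.eventually_lt (by fun_prop) (by fun_prop) hlt'
  obtain ⟨ε, hε, hball⟩ := Metric.eventually_nhds_iff_ball.mp (h1.and (h2.and h3))
  refine ⟨ε, hε, fun θ hθ => ?_⟩
  obtain ⟨k1, k2, k3⟩ := hball θ (by rwa [Real.ball_eq_Ioo])
  refine ⟨k1, fun h0 => ?_, k3, k2⟩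
  rw [h0, abs_zero, mul_zero] at k3
  exact lt_asymm k1 k3

theorem abs_cos_ne_sin {θ : ℝ} (h0 : 0 < θ) (hπ : θ < π) (h1 : θ ≠ π / 4) (h2 : θ ≠ 3 * π / 4) :
    |cos θ| ≠ sin θ := by
  intro h
  have hsq : cos θ ^ 2 = sin θ ^ 2 := by rw [← sq_abs, h]
  have hcos : cos (2 * θ) = 0 := by rw [cos_two_mul']; linarith
  obtain ⟨m, hm⟩ := cos_eq_zero_iff.mp hcos
  have hθ : θ = (2 * m + 1) * π / 4 := by linarith
  have hpi := pi_pos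
  have hm0 : (-1 : ℤ) < m := by
    have : (-1 : ℝ) < m := by nlinarith
    exact_mod_cast this
  have hm2 : m < 2 := by
    have : (m : ℝ) < 2 := by nlinarith
    exact_mod_cast this
  interval_cases m
  · exact h1 (by rw [hθ]; push_cast; ring)
  · exact h2 (by rw [hθ]; push_cast; ring)

/-- For odd `n`, there are open intervals around `π/4` and `3π/4`
such that for every `θ` in their union, except `π/4` and `3π/4` themselves,
`Φ_n^θ` has no critical zero, its nodal set is connected, and it has exactly
two nodal domains. -/
theorem stern_intervals_two_nodal_domains (n : ℕ) (hodd : Odd n) (hpos : 0 < n) :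
    ∃ a₁ b₁ a₂ b₂ : ℝ, a₁ < π / 4 ∧ π / 4 < b₁ ∧ a₂ < 3 * π / 4 ∧ 3 * π / 4 < b₂ ∧
      ∀ θ ∈ (Set.Ioo a₁ b₁ ∪ Set.Ioo a₂ b₂) \ {π / 4, 3 * π / 4},
        (∀ p : ℝ × ℝ, ¬ IsCriticalZero (Phi n θ) p) ∧
        IsConnected (nodalSet (Phi n θ)) ∧
        (nodalDomains (Phi n θ)).ncard = 2 := by
  obtain ⟨L₀, hL₀, hgap⟩ := (isOddHermiteSolution_hermiteH hodd).exists_gap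
  have hpi := pi_pos
  have hs2 : 0 < √2 / 2 := by positivity
  have h3 : 3 * π / 4 = π - π / 4 := by ring
  obtain ⟨ε₁, hε₁, h₁⟩ := exists_interval_ratio_lt (α := π / 4) hL₀ (by rwa [sin_pi_div_four])
    (by rw [sin_pi_div_four, cos_pi_div_four, abs_of_pos hs2])
  obtain ⟨ε₂, hε₂, h₂⟩ := exists_interval_ratio_lt (α := 3 * π / 4) hL₀
    (by rwa [h3, sin_pi_sub, sin_pi_div_four])
    (by rw [h3, sin_pi_sub, cos_pi_sub, sin_pi_div_four, cos_pi_div_four, abs_neg,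
      abs_of_pos hs2])
  refine ⟨max 0 (π / 4 - ε₁), min π (π / 4 + ε₁), max 0 (3 * π / 4 - ε₂),
    min π (3 * π / 4 + ε₂), max_lt (by linarith) (by linarith), lt_min (by linarith) (by linarith),
    max_lt (by linarith) (by linarith), lt_min (by linarith) (by linarith), ?_⟩
  rintro θ ⟨hθ, hne⟩
  have hne₁ : θ ≠ π / 4 := fun h => hne (Or.inl h)
  have hne₂ : θ ≠ 3 * π / 4 := fun h => hne (Or.inr h)
  obtain ⟨h0, hπ, hs, hc, hsc, hcs⟩ : 0 < θ ∧ θ < π ∧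
      0 < sin θ ∧ cos θ ≠ 0 ∧ sin θ < L₀ * |cos θ| ∧ |cos θ| < L₀ * sin θ := by
    rcases hθ with ⟨hl, hr⟩ | ⟨hl, hr⟩
    · rw [max_lt_iff] at hl
      rw [lt_min_iff] at hr
      exact ⟨hl.1, hr.1, h₁ θ ⟨hl.2, hr.2⟩⟩
    · rw [max_lt_iff] at hl
      rw [lt_min_iff] at hr
      exact ⟨hl.1, hr.1, h₂ θ ⟨hl.2, hr.2⟩⟩
  exact not_isCriticalZero_and_connected hodd hgap hs hc hsc hcs
    (abs_cos_ne_sin h0 hπ hne₁ hne₂)
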